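/- For a real function f with Fourier transform f̂, ∑_{λ=1,2} ∫∫ |f̂(l)|² [G^λ(k)·l]² / (|k|² + |k|) dk dl = C₃‖∇f‖², where C₃ = (2/(3π))·ln(1+Λ); indeed, ∑_λ [ε_λ(k)·l]² = |l|² − (k̂·l)², whose angular average is (2/3)|l|², so that C₃ = (2/3)(2π)⁻²·4π∫₀^Λ r/(r²+r) dr. -/

import Mathlib

open MeasureTheory Real
open scoped RealInnerProductSpace

local notation "E³" => EuclideanSpace ℝ (Fin 3)

/-! For fixed `l`, the weight of the `k`-integral is radial. An orthogonally invariant measure gives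
`(k̂·v)²` the same radially weighted integral for all `v` of a given norm, and summing over an
orthonormal basis, where `∑ᵢ (k̂·eᵢ)² = 1`, shows that this integral is the fraction `‖v‖² / d` of
that of the weight. In dimension three the factor `|l|² − (k̂·l)²` is therefore replaced by
`(2/3)|l|²`, and polar coordinates leave `4π ∫₀^Λ (1 + r)⁻¹ dr`. -/

section DirectionCosines

variable {E : Type*} [NormedAddCommGroup E] [InnerProductSpace ℝ E]

lemma sq_inner_div_norm_le (k v : E) : (⟪k, v⟫ / ‖k‖) ^ 2 ≤ ‖v‖ ^ 2 := by
  rw [sq_le_sq, abs_div, abs_norm, abs_norm]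
  exact div_le_of_le_mul₀ (norm_nonneg k) (norm_nonneg v)
    ((abs_real_inner_le_norm k v).trans_eq (mul_comm _ _))

lemma sum_sq_inner_div_norm {ι : Type*} [Fintype ι] (b : OrthonormalBasis ι ℝ E) {k : E}
    (hk : k ≠ 0) : ∑ i, (⟪k, b i⟫ / ‖k‖) ^ 2 = 1 := by
  simp only [div_pow]
  rw [← Finset.sum_div, b.sum_sq_inner_left, div_self (pow_ne_zero 2 (norm_ne_zero_iff.mpr hk))]

variable [MeasurableSpace E] [OpensMeasurableSpace E] {μ : Measure E} {f : E → ℝ}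

lemma integrable_mul_sq_inner_div_norm (hf : Integrable f μ) (v : E) :
    Integrable (fun k => f k * (⟪k, v⟫ / ‖k‖) ^ 2) μ := by
  have hmeas : Measurable fun k : E => (⟪k, v⟫ / ‖k‖) ^ 2 :=
    ((continuous_id.inner continuous_const).measurable.div measurable_norm).pow_const 2
  refine hf.mul_bdd (c := ‖v‖ ^ 2) hmeas.aestronglyMeasurable (.of_forall fun k => ?_)
  rw [norm_of_nonneg (sq_nonneg _)]
  exact sq_inner_div_norm_le k v

lemma sum_integral_mul_sq_inner_div_norm [NullSingletonClass μ] {ι : Type*} [Fintype ι]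
    (b : OrthonormalBasis ι ℝ E) (hf : Integrable f μ) :
    ∑ i, ∫ k, f k * (⟪k, b i⟫ / ‖k‖) ^ 2 ∂μ = ∫ k, f k ∂μ := by
  rw [← integral_finsetSum _ fun i _ => integrable_mul_sq_inner_div_norm hf (b i)]
  refine integral_congr_ae ?_
  filter_upwards [μ.ae_ne 0] with k hk
  rw [← Finset.mul_sum, sum_sq_inner_div_norm b hk, mul_one]

end DirectionCosines

section OrthogonallyInvariant

variable {E : Type*} [NormedAddCommGroup E] [InnerProductSpace ℝ E] [MeasurableSpace E]

/-- A measure is orthogonally invariant if every linear isometric automorphism preserves it. Both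
Lebesgue measure and its restrictions to balls about the origin are of this kind, so that the cutoff
`|k| ≤ Λ` can be kept in the measure. -/
def IsOrthogonallyInvariant (μ : Measure E) : Prop :=
  ∀ R : E ≃ₗᵢ[ℝ] E, MeasurePreserving R μ μ

lemma isOrthogonallyInvariant_volume [FiniteDimensional ℝ E] [BorelSpace E] :
    IsOrthogonallyInvariant (volume : Measure E) :=
  fun R => R.measurePreserving

namespace IsOrthogonallyInvariant

variable {μ : Measure E}

lemma restrict_closedBall [OpensMeasurableSpace E] (hμ : IsOrthogonallyInvariant μ) (r : ℝ) :
    IsOrthogonallyInvariant (μ.restrict (Metric.closedBall 0 r)) := by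
  intro R
  have hball : R ⁻¹' Metric.closedBall 0 r = Metric.closedBall 0 r := by
    simp [R.preimage_closedBall]
  simpa only [hball] using (hμ R).restrict_preimage
    (Metric.isClosed_closedBall (x := 0) (ε := r)).measurableSet

variable [BorelSpace E]

lemma integral_norm_inner_congr {F : Type*} [NormedAddCommGroup F] [NormedSpace ℝ F]
    (hμ : IsOrthogonallyInvariant μ) (g : ℝ → ℝ → F) {v w : E} (hvw : ‖v‖ = ‖w‖) :
    ∫ k, g ‖k‖ ⟪k, v⟫ ∂μ = ∫ k, g ‖k‖ ⟪k, w⟫ ∂μ := by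
  let R : E ≃ₗᵢ[ℝ] E := (ℝ ∙ (v - w))ᗮ.reflection
  have hR : R v = w := Submodule.reflection_sub hvw
  rw [← (hμ R).integral_comp R.toHomeomorph.measurableEmbedding fun k => g ‖k‖ ⟪k, w⟫]
  simp only [← hR, LinearIsometryEquiv.norm_map, LinearIsometryEquiv.inner_map_map]

open Module (finrank)

variable [FiniteDimensional ℝ E] [Nontrivial E] [NullSingletonClass μ] {h : ℝ → ℝ}

lemma integral_mul_sq_inner_div_norm (hμ : IsOrthogonallyInvariant μ)
    (hh : Integrable (fun k => h ‖k‖) μ) (v : E) :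
    ∫ k, h ‖k‖ * (⟪k, v⟫ / ‖k‖) ^ 2 ∂μ = ‖v‖ ^ 2 / finrank ℝ E * ∫ k, h ‖k‖ ∂μ := by
  let b := stdOrthonormalBasis ℝ E
  have hbasis (i) : ∫ k, h ‖k‖ * (⟪k, v⟫ / ‖k‖) ^ 2 ∂μ =
      ‖v‖ ^ 2 * ∫ k, h ‖k‖ * (⟪k, b i⟫ / ‖k‖) ^ 2 ∂μ := by
    have hnorm : ‖v‖ = ‖‖v‖ • b i‖ := by simp [norm_smul]
    rw [hμ.integral_norm_inner_congr (fun r t => h r * (t / r) ^ 2) hnorm, ← integral_const_mul]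
    congr with k
    rw [inner_smul_right]
    ring
  have hsum : finrank ℝ E * ∫ k, h ‖k‖ * (⟪k, v⟫ / ‖k‖) ^ 2 ∂μ = ‖v‖ ^ 2 * ∫ k, h ‖k‖ ∂μ := by
    rw [← sum_integral_mul_sq_inner_div_norm b hh, Finset.mul_sum,
      ← Finset.sum_congr rfl fun i _ => hbasis i]
    simp
  have hdim : (finrank ℝ E : ℝ) ≠ 0 := Nat.cast_ne_zero.mpr Module.finrank_pos.ne'
  rw [div_mul_eq_mul_div, eq_div_iff hdim, mul_comm, hsum]

lemma integral_mul_norm_sq_sub_sq_inner_div_norm (hμ : IsOrthogonallyInvariant μ)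
    (hh : Integrable (fun k => h ‖k‖) μ) (v : E) :
    ∫ k, h ‖k‖ * (‖v‖ ^ 2 - (⟪k, v⟫ / ‖k‖) ^ 2) ∂μ =
      (1 - 1 / finrank ℝ E) * ‖v‖ ^ 2 * ∫ k, h ‖k‖ ∂μ := by
  simp only [mul_sub]
  rw [integral_sub (hh.mul_const _) (integrable_mul_sq_inner_div_norm hh v), integral_mul_const,
    hμ.integral_mul_sq_inner_div_norm hh v]
  ring

end IsOrthogonallyInvariant

end OrthogonallyInvariant

section PolarCoordinates

open Set
open Module (finrank)

lemma indicator_closedBall_comp_norm {E F : Type*} [SeminormedAddGroup E] [Zero F] (f : ℝ → F)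
    (r : ℝ) : (Metric.closedBall (0 : E) r).indicator (fun x => f ‖x‖) =
      fun x => (Iic r).indicator f ‖x‖ := by
  ext x
  simp [indicator]

variable {E F : Type*} [NormedAddCommGroup E] [NormedSpace ℝ E] [FiniteDimensional ℝ E]
  [Nontrivial E] [MeasurableSpace E] [BorelSpace E] [NormedAddCommGroup F] [NormedSpace ℝ F]
  (μ : Measure E) [μ.IsAddHaarMeasure] (f : ℝ → F) (r : ℝ)

lemma integrableOn_closedBall_fun_norm_addHaar :
    IntegrableOn (fun x => f ‖x‖) (Metric.closedBall 0 r) μ ↔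
      IntegrableOn (fun y => y ^ (finrank ℝ E - 1) • f y) (Ioc 0 r) := by
  rw [← integrable_indicator_iff Metric.isClosed_closedBall.measurableSet,
    indicator_closedBall_comp_norm, integrable_fun_norm_addHaar]
  simp only [← indicator_smul]
  rw [IntegrableOn, integrable_indicator_iff measurableSet_Iic, IntegrableOn, IntegrableOn,
    Measure.restrict_restrict measurableSet_Iic, inter_comm, Ioi_inter_Iic]

lemma setIntegral_closedBall_fun_norm_addHaar :
    ∫ x in Metric.closedBall 0 r, f ‖x‖ ∂μ =
      finrank ℝ E • μ.real (Metric.ball 0 1) • ∫ y in Ioc 0 r, y ^ (finrank ℝ E - 1) • f y := by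
  rw [← integral_indicator Metric.isClosed_closedBall.measurableSet,
    indicator_closedBall_comp_norm, integral_fun_norm_addHaar]
  simp only [← indicator_smul]
  rw [setIntegral_indicator measurableSet_Iic, Ioi_inter_Iic]

end PolarCoordinates

lemma sq_mul_inv_div_sq_add_self {r : ℝ} (hr : 0 < r) :
    r ^ 2 * (r⁻¹ / (r ^ 2 + r)) = (1 + r)⁻¹ := by
  field_simp
  ring

lemma continuousOn_inv_one_add : ContinuousOn (fun r : ℝ => (1 + r)⁻¹) (Set.Ici 0) :=
  ContinuousOn.inv₀ (by fun_prop) fun r (hr : 0 ≤ r) => by positivity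

lemma integral_inv_one_add {Λ : ℝ} (hΛ : -1 < Λ) : ∫ r in 0..Λ, (1 + r)⁻¹ = log (1 + Λ) := by
  rw [intervalIntegral.integral_comp_add_left (fun x => x⁻¹),
    integral_inv_of_pos (by norm_num) (by linarith)]
  simp

lemma integrableOn_closedBall_inv_norm_div (Λ : ℝ) :
    IntegrableOn (fun k : E³ => ‖k‖⁻¹ / (‖k‖ ^ 2 + ‖k‖)) (Metric.closedBall 0 Λ) := by
  rw [integrableOn_closedBall_fun_norm_addHaar volume (fun r => r⁻¹ / (r ^ 2 + r))]
  have hbounded : IntegrableOn (fun r : ℝ => (1 + r)⁻¹) (Set.Ioc 0 Λ) :=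
    ((continuousOn_inv_one_add.mono Set.Icc_subset_Ici_self).integrableOn_Icc).mono_set
      Set.Ioc_subset_Icc_self
  refine hbounded.congr_fun (fun r hr => ?_) measurableSet_Ioc
  simpa using (sq_mul_inv_div_sq_add_self hr.1).symm

lemma setIntegral_closedBall_inv_norm_div {Λ : ℝ} (hΛ : 0 ≤ Λ) :
    ∫ k in Metric.closedBall (0 : E³) Λ, ‖k‖⁻¹ / (‖k‖ ^ 2 + ‖k‖) = 4 * π * log (1 + Λ) := by
  have hvol : (volume : Measure E³).real (Metric.ball 0 1) = π * 4 / 3 := by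
    simp [Measure.real, ENNReal.toReal_ofReal (show 0 ≤ π * 4 / 3 by positivity)]
  have hradial : ∫ r in Set.Ioc 0 Λ, r ^ 2 * (r⁻¹ / (r ^ 2 + r)) = log (1 + Λ) := by
    rw [setIntegral_congr_fun measurableSet_Ioc fun r hr => sq_mul_inv_div_sq_add_self hr.1,
      ← intervalIntegral.integral_of_le hΛ, integral_inv_one_add (by linarith)]
  rw [setIntegral_closedBall_fun_norm_addHaar volume (fun r => r⁻¹ / (r ^ 2 + r)), hvol]
  simp only [finrank_euclideanSpace_fin, Nat.add_one_sub_one, smul_eq_mul, nsmul_eq_mul, hradial]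
  push_cast
  ring

lemma setIntegral_one_photon {Λ : ℝ} (hΛ : 0 ≤ Λ) (c : ℝ) (l : E³) :
    ∫ k in Metric.closedBall (0 : E³) Λ,
        c * (‖l‖ ^ 2 - (⟪k, l⟫ / ‖k‖) ^ 2) * ((2 * π) ^ 2 * ‖k‖)⁻¹ / (‖k‖ ^ 2 + ‖k‖) =
      2 / (3 * π) * log (1 + Λ) * (‖l‖ ^ 2 * c) := by
  have hinv : IsOrthogonallyInvariant (volume.restrict (Metric.closedBall (0 : E³) Λ)) :=
    isOrthogonallyInvariant_volume.restrict_closedBall Λ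
  calc
    _ = ∫ k in Metric.closedBall (0 : E³) Λ, c * ((2 * π) ^ 2)⁻¹ *
          (‖k‖⁻¹ / (‖k‖ ^ 2 + ‖k‖) * (‖l‖ ^ 2 - (⟪k, l⟫ / ‖k‖) ^ 2)) := by
      congr with k
      ring
    _ = c * ((2 * π) ^ 2)⁻¹ * ((1 - 1 / 3) * ‖l‖ ^ 2 * (4 * π * log (1 + Λ))) := by
      rw [integral_const_mul, hinv.integral_mul_norm_sq_sub_sq_inner_div_norm
        (h := fun r => r⁻¹ / (r ^ 2 + r)) (integrableOn_closedBall_inv_norm_div Λ),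
        setIntegral_closedBall_inv_norm_div hΛ, finrank_euclideanSpace_fin, Nat.cast_ofNat]
    _ = 2 / (3 * π) * log (1 + Λ) * (‖l‖ ^ 2 * c) := by
      field_simp
      ring

theorem one_photon_integral_general {Λ : ℝ} (hΛ : 0 ≤ Λ) (ν : Measure E³) {F : E³ → ℝ}
    (hFi : Integrable (fun l => ‖l‖ ^ 2 * F l) ν) :
    Integrable (fun l => ∫ k in Metric.closedBall (0 : E³) Λ,
        F l * (‖l‖ ^ 2 - (⟪k, l⟫ / ‖k‖) ^ 2) * ((2 * π) ^ 2 * ‖k‖)⁻¹ / (‖k‖ ^ 2 + ‖k‖)) ν ∧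
      ∫ l, (∫ k in Metric.closedBall (0 : E³) Λ,
          F l * (‖l‖ ^ 2 - (⟪k, l⟫ / ‖k‖) ^ 2) * ((2 * π) ^ 2 * ‖k‖)⁻¹ / (‖k‖ ^ 2 + ‖k‖)) ∂ν =
        2 / (3 * π) * log (1 + Λ) * ∫ l, ‖l‖ ^ 2 * F l ∂ν := by
  simp only [setIntegral_one_photon hΛ]
  exact ⟨hFi.const_mul _, integral_const_mul _ _⟩

/-- The explicit one-photon integral: with form factor
`G^λ(k) = χ(|k| ≤ Λ)(2π|k|^{1/2})⁻¹ε_λ(k)` and polarization sum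
`∑_λ (ε_λ(k)·l)² = |l|² − (k̂·l)²`, for any nonnegative weight `F = |f̂|²`,
`∫∫_{|k|≤Λ} F(l)(|l|² − (k̂·l)²)((2π)²|k|)⁻¹/(|k|²+|k|) dk dl
  = (2/(3π))·ln(1+Λ)·∫ |l|²F(l) dl  (= C₃‖∇f‖²)`. -/
theorem one_photon_integral (Λ : ℝ) (hΛ : 0 < Λ) (F : E³ → ℝ)
    (hF : ∀ l, 0 ≤ F l) (hFmeas : Measurable F)
    (hFi : Integrable (fun l : E³ => ‖l‖ ^ 2 * F l)) :
    ∫ l : E³, ∫ k in Metric.closedBall (0 : E³) Λ,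
        F l * (‖l‖ ^ 2 - (⟪k, l⟫ / ‖k‖) ^ 2) * ((2 * π) ^ 2 * ‖k‖)⁻¹ /
          (‖k‖ ^ 2 + ‖k‖) =
      2 / (3 * π) * Real.log (1 + Λ) * ∫ l : E³, ‖l‖ ^ 2 * F l :=
  (one_photon_integral_general hΛ.le volume hFi).2
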